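/- arXiv:2407.00636 — 13 statements merged into one kernel-verified Lean document; each statement's English description precedes it below -/
import Mathlib

section
/- Let X be a lattice, C a linearly ordered set, and f : X → C. If f is lattice superextremal, then f is quasisupermodular. -/
/-- `f` is lattice superextremal if for all `x, y` there is `t > f y` with
either `f (x ⊓ y) ⊔ f (x ⊔ y) ≥ f x ⊔ t` or `f (x ⊓ y) ⊓ f (x ⊔ y) ≥ f x ⊓ t`. -/
def LatticeSuperextremal {X C : Type*} [Lattice X] [LinearOrder C] (f : X → C) : Prop :=
  ∀ x y : X, ∃ t : C, f y < t ∧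
    (f x ⊔ t ≤ f (x ⊓ y) ⊔ f (x ⊔ y) ∨ f x ⊓ t ≤ f (x ⊓ y) ⊓ f (x ⊔ y))

/-- `f` is quasisupermodular if `f (x ⊓ y) ≤ f x → f y ≤ f (x ⊔ y)` and
`f (x ⊓ y) < f x → f y < f (x ⊔ y)` for all `x, y`. -/
def Quasisupermodular {X C : Type*} [Lattice X] [LinearOrder C] (f : X → C) : Prop :=
  ∀ x y : X, (f (x ⊓ y) ≤ f x → f y ≤ f (x ⊔ y)) ∧ (f (x ⊓ y) < f x → f y < f (x ⊔ y))

/-- Lemma 2.4: a lattice superextremal map is quasisupermodular. -/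
theorem quasisupermodular_of_latticeSuperextremal {X C : Type*} [Lattice X] [LinearOrder C]
    (f : X → C) (hf : LatticeSuperextremal f) : Quasisupermodular f := by
  intro x y
  obtain ⟨t, ht, h⟩ := hf x y
  obtain ⟨s, hs, k⟩ := hf y x
  rw [inf_comm y x, sup_comm y x] at k
  generalize f (x ⊓ y) = m at *
  generalize f (x ⊔ y) = j at *
  generalize f x = a at *
  generalize f y = b at *
  simp only [le_sup_iff, sup_le_iff, le_inf_iff, inf_le_iff] at h k
  constructor
  · intro hm
    by_contra hj
    grind
  · intro hm
    by_contra hj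
    grind
end

section
/- Let X be a lattice, C a linearly ordered set with no maximum element, and f : X → C. Then f is quasisupermodular if and only if f is lattice superextremal. -/
/-- Lemma 2.5: if the chain `C` has no maximum element, then `f : X → C` is
quasisupermodular if and only if it is lattice superextremal. -/
theorem quasisupermodular_iff_latticeSuperextremal {X C : Type*} [Lattice X] [LinearOrder C]
    (hC : ∀ c : C, ∃ c' : C, c < c') (f : X → C) :
    Quasisupermodular f ↔ LatticeSuperextremal f := by
  constructor
  · intro h x y
    obtain ⟨h1, h2⟩ := h x y
    obtain ⟨h3, h4⟩ := h y x
    rw [inf_comm y x, sup_comm y x] at h3 h4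
    obtain ⟨c, hc⟩ := hC (f y)
    generalize f (x ⊓ y) = m at *
    generalize f (x ⊔ y) = j at *
    generalize f x = a at *
    generalize f y = b at *
    by_contra hn
    push Not at hn
    have k1 := hn c
    have k2 := hn j
    have k3 := hn m
    have k4 := hn a
    simp only [lt_sup_iff, sup_lt_iff, lt_inf_iff, inf_lt_iff] at k1 k2 k3 k4
    grind
  · intro h x y
    obtain ⟨t, h1, h2⟩ := h x y
    obtain ⟨s, h3, h4⟩ := h y x
    rw [inf_comm y x, sup_comm y x] at h4
    generalize f (x ⊓ y) = m at *
    generalize f (x ⊔ y) = j at *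
    generalize f x = a at *
    generalize f y = b at *
    simp only [sup_le_iff, le_sup_iff, le_inf_iff, inf_le_iff] at h2 h4
    grind
end

section
/- Let X be a lattice, C a linearly ordered set, and f : X → C. Then f is subextremal if and only if f is both meet-subextremal and join-subextremal. -/
/-- `f` is subextremal if for all `x, y`, either `f (x ⊓ y) ⊔ f (x ⊔ y) ≤ f x ⊔ f y`
or `f (x ⊓ y) ⊓ f (x ⊔ y) ≤ f x ⊓ f y`. -/
def Subextremal {X C : Type*} [Lattice X] [LinearOrder C] (f : X → C) : Prop :=
  ∀ x y : X, f (x ⊓ y) ⊔ f (x ⊔ y) ≤ f x ⊔ f y ∨ f (x ⊓ y) ⊓ f (x ⊔ y) ≤ f x ⊓ f y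

/-- `f` is meet-subextremal if for all `x, y`, either `f (x ⊓ y) ≤ f x` or
`f (x ⊔ y) ≤ f x ⊔ f y`. -/
def MeetSubextremal {X C : Type*} [Lattice X] [LinearOrder C] (f : X → C) : Prop :=
  ∀ x y : X, f (x ⊓ y) ≤ f x ∨ f (x ⊔ y) ≤ f x ⊔ f y

/-- `f` is join-subextremal if for all `x, y`, either `f (x ⊓ y) ≤ f x ⊔ f y` or
`f (x ⊔ y) ≤ f x`. -/
def JoinSubextremal {X C : Type*} [Lattice X] [LinearOrder C] (f : X → C) : Prop :=
  ∀ x y : X, f (x ⊓ y) ≤ f x ⊔ f y ∨ f (x ⊔ y) ≤ f x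

/-- Lemma 2.8: `f` is subextremal iff it is both meet-subextremal and join-subextremal. -/
theorem subextremal_iff_meet_and_join {X C : Type*} [Lattice X] [LinearOrder C] (f : X → C) :
    Subextremal f ↔ MeetSubextremal f ∧ JoinSubextremal f := by
  constructor
  · intro h
    refine ⟨fun x y => ?_, fun x y => ?_⟩ <;>
    · have h1 := h x y
      simp only [sup_le_iff, le_inf_iff, inf_le_iff, le_sup_iff] at *
      grind
  · rintro ⟨hm, hj⟩ x y
    have h1 := hm x y
    have h2 := hm y x
    have h3 := hj x y
    have h4 := hj y x
    rw [inf_comm y x, sup_comm y x] at h2 h4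
    simp only [sup_le_iff, le_inf_iff, inf_le_iff, le_sup_iff] at *
    grind
end

section
/- Let X be a lattice, C a linearly ordered set, and f : X → C. Then f is superextremal if and only if f is both meet-superextremal and join-superextremal. -/
/-- `f` is superextremal if for all `x, y`, either `f (x ⊓ y) ⊔ f (x ⊔ y) ≥ f x ⊔ f y`
or `f (x ⊓ y) ⊓ f (x ⊔ y) ≥ f x ⊓ f y`. -/
def Superextremal {X C : Type*} [Lattice X] [LinearOrder C] (f : X → C) : Prop :=
  ∀ x y : X, f x ⊔ f y ≤ f (x ⊓ y) ⊔ f (x ⊔ y) ∨ f x ⊓ f y ≤ f (x ⊓ y) ⊓ f (x ⊔ y)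

/-- `f` is meet-superextremal if for all `x, y`, either `f (x ⊓ y) ≥ f x` or
`f (x ⊔ y) ≥ f x ⊓ f y`. -/
def MeetSuperextremal {X C : Type*} [Lattice X] [LinearOrder C] (f : X → C) : Prop :=
  ∀ x y : X, f x ≤ f (x ⊓ y) ∨ f x ⊓ f y ≤ f (x ⊔ y)

/-- `f` is join-superextremal if for all `x, y`, either `f (x ⊓ y) ≥ f x ⊓ f y` or
`f (x ⊔ y) ≥ f x`. -/
def JoinSuperextremal {X C : Type*} [Lattice X] [LinearOrder C] (f : X → C) : Prop :=
  ∀ x y : X, f x ⊓ f y ≤ f (x ⊓ y) ∨ f x ≤ f (x ⊔ y)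

/-- Dual of Lemma 2.8: `f` is superextremal iff it is both meet-superextremal and
join-superextremal. -/
theorem superextremal_iff_meet_and_join {X C : Type*} [Lattice X] [LinearOrder C] (f : X → C) :
    Superextremal f ↔ MeetSuperextremal f ∧ JoinSuperextremal f := by
  constructor
  · intro h
    constructor
    · intro x y
      have := h x y
      simp only [le_inf_iff, le_sup_iff, sup_le_iff, inf_le_iff] at *
      grind
    · intro x y
      have := h x y
      simp only [le_inf_iff, le_sup_iff, sup_le_iff, inf_le_iff] at *
      grind
  · rintro ⟨hm, hj⟩ x y
    have h1 := hm x y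
    have h2 := hj x y
    have h3 := hm y x
    have h4 := hj y x
    rw [inf_comm y x, sup_comm y x] at h3 h4
    clear hm hj
    simp only [le_inf_iff, le_sup_iff, sup_le_iff, inf_le_iff] at *
    grind
end

section
/- Let X be a lattice, C a linearly ordered set, and f : X → C. If f is weakly quasisupermodular, then f is superextremal. -/
/-- `f` is weakly quasisupermodular if `f (x ⊓ y) < f x → f x ⊓ f y < f (x ⊔ y)` and
`f (x ⊔ y) < f x → f x ⊓ f y < f (x ⊓ y)` for all `x, y`. -/
def WeaklyQuasisupermodular {X C : Type*} [Lattice X] [LinearOrder C] (f : X → C) : Prop :=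
  ∀ x y : X, (f (x ⊓ y) < f x → f x ⊓ f y < f (x ⊔ y)) ∧
    (f (x ⊔ y) < f x → f x ⊓ f y < f (x ⊓ y))

/-- Corollary 2.9: a weakly quasisupermodular map is superextremal. -/
theorem superextremal_of_weaklyQuasisupermodular {X C : Type*} [Lattice X] [LinearOrder C]
    (f : X → C) (hf : WeaklyQuasisupermodular f) : Superextremal f := by
  intro x y
  by_cases h : f x ⊔ f y ≤ f (x ⊓ y) ⊔ f (x ⊔ y)
  · exact Or.inl h
  · right
    rw [not_le, lt_sup_iff, sup_lt_iff, sup_lt_iff] at h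
    rcases h with ⟨h1, h2⟩ | ⟨h1, h2⟩
    · exact le_inf ((hf x y).2 h2).le ((hf x y).1 h1).le
    · have hyx := hf y x
      rw [inf_comm y x, sup_comm y x, inf_comm (f y) (f x)] at hyx
      exact le_inf (hyx.2 h2).le (hyx.1 h1).le
end

section
/- Let X be a nonempty lattice, C a linearly ordered set, and f : X → C a meet-subextremal map. Suppose that for every t ∈ C, the lower level set [f ≤ t] = {x ∈ X : f(x) ≤ t}, with the order induced from X, is chain-complete downwards and, whenever nonempty, has a maximal element. Then the set argmin f of minimizers of f is a nonempty quasisublattice of X (in particular, f attains a minimum on X). -/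
/-- A subset `A` of a poset is chain-complete downwards if every nonempty chain
contained in `A` has a greatest lower bound within `A` (in the induced order). -/
def ChainCompleteDownwardsOn {X : Type*} [PartialOrder X] (A : Set X) : Prop :=
  ∀ c : Set X, c ⊆ A → c.Nonempty → IsChain (· ≤ ·) c →
    ∃ m ∈ A, (∀ x ∈ c, m ≤ x) ∧ ∀ b ∈ A, (∀ x ∈ c, b ≤ x) → b ≤ m

/-- A subset `A` of a poset has a maximal element. -/
def HasMaximalOn {X : Type*} [PartialOrder X] (A : Set X) : Prop :=
  ∃ m ∈ A, ∀ x ∈ A, m ≤ x → x = m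

/-- A subset `A` of a lattice is a quasisublattice if for all `x, y ∈ A`, at least
one of `x ⊓ y`, `x ⊔ y` belongs to `A`. -/
def Quasisublattice {X : Type*} [Lattice X] (A : Set X) : Prop :=
  ∀ x ∈ A, ∀ y ∈ A, x ⊓ y ∈ A ∨ x ⊔ y ∈ A

/-- Zorn's lemma, downward version on a set. -/
lemma exists_min_of_chain {P : Type*} [PartialOrder P] (S : Set P) (x : P) (hx : x ∈ S)
    (h : ∀ c ⊆ S, c.Nonempty → IsChain (· ≤ ·) c → ∃ m ∈ S, ∀ z ∈ c, m ≤ z) :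
    ∃ m ∈ S, ∀ y ∈ S, y ≤ m → y = m := by
  obtain ⟨m, -, hm⟩ := zorn_le_nonempty₀ (α := Pᵒᵈ) (OrderDual.ofDual ⁻¹' S)
    (fun c hc hch y hy => by
      obtain ⟨m, hm, hm'⟩ := h (OrderDual.toDual ⁻¹' c) hc ⟨_, hy⟩ hch.symm
      exact ⟨OrderDual.toDual m, hm, fun z hz => hm' _ hz⟩) (OrderDual.toDual x) hx
  refine ⟨OrderDual.ofDual m, hm.1, fun y hy hle => le_antisymm hle ?_⟩
  exact hm.2 (y := OrderDual.toDual y) hy hle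

/-- Theorem 3.3: if `f : X → C` is meet-subextremal from a nonempty lattice to a chain
and every lower level set `[f ≤ t]` is chain-complete downwards and (when nonempty)
admits a maximal element, then `argmin f` is a nonempty quasisublattice of `X`. -/
theorem argmin_nonempty_quasisublattice_of_meetSubextremal {X C : Type*} [Lattice X]
    [Nonempty X] [LinearOrder C] (f : X → C) (hf : MeetSubextremal f)
    (hcc : ∀ t : C, ChainCompleteDownwardsOn {x : X | f x ≤ t})
    (hmax : ∀ t : C, ({x : X | f x ≤ t}).Nonempty → HasMaximalOn {x : X | f x ≤ t}) :
    ({x : X | ∀ y : X, f x ≤ f y}).Nonempty ∧ Quasisublattice {x : X | ∀ y : X, f x ≤ f y} := by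
  refine ⟨?_, ?_⟩
  swap
  · intro x hx y hy
    rcases hf x y with h | h
    · exact Or.inl fun z => h.trans (hx z)
    · exact Or.inr fun z => h.trans (sup_le (hx z) (hy z))
  -- maximal elements of the level sets
  choose m hmA hmM using fun a : C => fun h => hmax a h
  have hne : ∀ a : X, ({x : X | f x ≤ f a}).Nonempty := fun a => ⟨a, le_refl (f a)⟩
  have key : ∀ a x : X, f x ≤ f a → f (x ⊓ m (f a) (hne a)) ≤ f x := by
    intro a x hx
    rcases hf x (m (f a) (hne a)) with h | h
    · exact h
    · have h1 := hmM (f a) (hne a) (x ⊔ m (f a) (hne a))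
        (h.trans (sup_le hx (hmA (f a) (hne a)))) le_sup_right
      rw [inf_eq_left.2 (sup_eq_right.1 h1)]
  -- greatest element of the level set below all earlier maximal elements
  have hgr : ∀ a : X, ∃ z : X, f z ≤ f a ∧ (∀ b, f a ≤ f b → z ≤ m (f b) (hne b)) ∧
      ∀ y, f y ≤ f a → (∀ b, f a ≤ f b → y ≤ m (f b) (hne b)) → y ≤ z := by
    intro a
    obtain ⟨z, ⟨hz1, hz2⟩, hz3⟩ := exists_min_of_chain
      {z : X | f z ≤ f a ∧ ∀ y, f y ≤ f a → (∀ b, f a ≤ f b → y ≤ m (f b) (hne b)) → y ≤ z}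
      (m (f a) (hne a)) ⟨hmA _ _, fun y _ h => h a le_rfl⟩ (by
        intro c hc hcn hch
        obtain ⟨w, hw, hw1, hw2⟩ := hcc (f a) c (fun x hx => (hc hx).1) hcn hch
        exact ⟨w, ⟨hw, fun y hy hyb => hw2 y hy fun x hx => (hc hx).2 y hy hyb⟩, hw1⟩)
    refine ⟨z, hz1, fun b hb => ?_, hz2⟩
    have := hz3 (z ⊓ m (f b) (hne b))
      ⟨(key b z (hz1.trans hb)).trans hz1, fun y hy hyb => le_inf (hz2 y hy hyb) (hyb b hb)⟩
      inf_le_left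
    exact inf_eq_left.1 this
  choose g hg1 hg2 hg3 using hgr
  -- minimal monotone family
  obtain ⟨k, ⟨hk1, hk2⟩, hk3⟩ := exists_min_of_chain
    {k : X → X | (∀ a, f (k a) ≤ f a) ∧ ∀ a b, f a ≤ f b → k a ≤ k b} g
    ⟨hg1, fun a b hab => hg3 b (g a) ((hg1 a).trans hab)
      fun d hd => hg2 a d (hab.trans hd)⟩ (by
      intro c hc hcn hch
      have H : ∀ a, ∃ w, f w ≤ f a ∧ (∀ k ∈ c, w ≤ k a) ∧
          ∀ b, f b ≤ f a → (∀ k ∈ c, b ≤ k a) → b ≤ w := by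
        intro a
        obtain ⟨w, hw, hw1, hw2⟩ := hcc (f a) ((fun k : X → X => k a) '' c)
          (by rintro _ ⟨k, hk, rfl⟩; exact (hc hk).1 a) (hcn.image _)
          (by
            rintro _ ⟨k, hk, rfl⟩ _ ⟨l, hl, rfl⟩ -
            rcases hch.total hk hl with h | h
            · exact Or.inl (h a)
            · exact Or.inr (h a))
        exact ⟨w, hw, fun k hk => hw1 _ ⟨k, hk, rfl⟩,
          fun b hb hbk => hw2 b hb (by rintro _ ⟨k, hk, rfl⟩; exact hbk k hk)⟩
      choose w hw1 hw2 hw3 using H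
      exact ⟨w, ⟨hw1, fun a b hab => hw3 b _ ((hw1 a).trans hab)
        fun k hk => (hw2 a k hk).trans ((hc hk).2 a b hab)⟩, fun k hk a => hw2 a k hk⟩)
  -- infima of the tails
  have H : ∀ a, ∃ w, f w ≤ f a ∧ (∀ s, f s ≤ f a → w ≤ k s) ∧
      ∀ b, f b ≤ f a → (∀ s, f s ≤ f a → b ≤ k s) → b ≤ w := by
    intro a
    obtain ⟨w, hw, hw1, hw2⟩ := hcc (f a) (k '' {s | f s ≤ f a})
      (by rintro _ ⟨s, hs, rfl⟩; exact (hk1 s).trans hs) ⟨_, a, le_refl (f a), rfl⟩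
      (by
        rintro _ ⟨s, hs, rfl⟩ _ ⟨t, ht, rfl⟩ -
        rcases le_total (f s) (f t) with h | h
        · exact Or.inl (hk2 _ _ h)
        · exact Or.inr (hk2 _ _ h))
    exact ⟨w, hw, fun s hs => hw1 _ ⟨s, hs, rfl⟩,
      fun b hb hbk => hw2 b hb (by rintro _ ⟨s, hs, rfl⟩; exact hbk s hs)⟩
  choose w hw1 hw2 hw3 using H
  have hwk : w = k := by
    refine hk3 w ⟨hw1, fun a b hab => hw3 b _ ((hw1 a).trans hab) fun s hs => ?_⟩
      fun a => hw2 a a le_rfl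
    rcases le_total (f s) (f a) with h | h
    · exact hw2 a s h
    · exact (hw2 a a le_rfl).trans (hk2 a s h)
  subst hwk
  obtain ⟨a⟩ := ‹Nonempty X›
  refine ⟨w a, fun y => ?_⟩
  rcases le_total (f a) (f y) with h | h
  · exact (hw1 a).trans h
  · rw [le_antisymm (hw2 a y h) (hk2 y a h)]
    exact hw1 y
end

section
/- Let X be a nonempty lattice, C a linearly ordered set, and f : X → C a join-subextremal map. Suppose that for every t ∈ C, the lower level set [f ≤ t] = {x ∈ X : f(x) ≤ t}, with the order induced from X, is chain-complete upwards and, whenever nonempty, has a minimal element. Then the set argmin f of minimizers of f is a nonempty quasisublattice of X. -/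
/-- A subset `A` of a poset is chain-complete upwards if every nonempty chain
contained in `A` has a least upper bound within `A` (in the induced order). -/
def ChainCompleteUpwardsOn {X : Type*} [PartialOrder X] (A : Set X) : Prop :=
  ∀ c : Set X, c ⊆ A → c.Nonempty → IsChain (· ≤ ·) c →
    ∃ m ∈ A, (∀ x ∈ c, x ≤ m) ∧ ∀ b ∈ A, (∀ x ∈ c, x ≤ b) → m ≤ b

/-- A subset `A` of a poset has a minimal element. -/
def HasMinimalOn {X : Type*} [PartialOrder X] (A : Set X) : Prop :=
  ∃ m ∈ A, ∀ x ∈ A, x ≤ m → x = m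

/-- Corollary 3.5 (1): if `f : X → C` is join-subextremal from a nonempty lattice to a
chain and every lower level set `[f ≤ t]` is chain-complete upwards and (when nonempty)
admits a minimal element, then `argmin f` is a nonempty quasisublattice of `X`. -/
theorem argmin_nonempty_quasisublattice_of_joinSubextremal {X C : Type*} [Lattice X]
    [Nonempty X] [LinearOrder C] (f : X → C) (hf : JoinSubextremal f)
    (hcc : ∀ t : C, ChainCompleteUpwardsOn {x : X | f x ≤ t})
    (hmin : ∀ t : C, ({x : X | f x ≤ t}).Nonempty → HasMinimalOn {x : X | f x ≤ t}) :
    ({x : X | ∀ y : X, f x ≤ f y}).Nonempty ∧ Quasisublattice {x : X | ∀ y : X, f x ≤ f y} := by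
  refine ⟨?_, ?_⟩
  swap
  · intro x hx y hy
    rcases hf x y with h | h
    · left
      intro z
      exact h.trans (sup_le (hx z) (hy z))
    · right
      intro z
      exact h.trans (hx z)
  -- minimal elements of the level sets
  choose a haL hamin using fun x : X => hmin (f x) ⟨x, le_rfl⟩
  have key : ∀ x y, f y ≤ f x → f (a x ⊔ y) ≤ f y := by
    intro x y hy
    rcases hf y (a x) with h | h
    · have h1 : f (y ⊓ a x) ≤ f x := h.trans (sup_le hy (haL x))
      have h2 : y ⊓ a x = a x := hamin x _ h1 inf_le_right
      have h3 : a x ≤ y := inf_eq_right.mp h2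
      rw [sup_eq_right.mpr h3]
    · rw [sup_comm]
      exact h
  -- least element of the level set lying above all earlier minimal elements
  have hb : ∀ x, ∃ b, f b ≤ f x ∧ (∀ s, f x ≤ f s → a s ≤ b) ∧
      ∀ y, f y ≤ f x → (∀ s, f x ≤ f s → a s ≤ y) → b ≤ y := by
    intro x
    obtain ⟨b, -, hbm⟩ := zorn_le_nonempty₀
      {z : X | f z ≤ f x ∧ ∀ y, f y ≤ f x → (∀ s, f x ≤ f s → a s ≤ y) → z ≤ y}
      (by
        intro c hc hch y hy
        obtain ⟨m, hmL, hub, hlub⟩ := hcc (f x) c (fun z hz => (hc hz).1) ⟨y, hy⟩ hch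
        exact ⟨m, ⟨hmL, fun w hw hw' => hlub w hw fun z hz => (hc hz).2 w hw hw'⟩, hub⟩)
      (a x) ⟨haL x, fun y _ h => h x le_rfl⟩
    refine ⟨b, hbm.prop.1, fun s hs => ?_, hbm.prop.2⟩
    have h1 := hbm.le_of_ge (y := a s ⊔ b)
      ⟨(key s b (hbm.prop.1.trans hs)).trans hbm.prop.1,
        fun y hy hy' => sup_le (hy' s hs) (hbm.prop.2 y hy hy')⟩ le_sup_right
    exact le_sup_left.trans h1
  choose b hbL hbU hbl using hb
  -- a maximal monotone selection of the level sets
  obtain ⟨m, -, hm⟩ := zorn_le_nonempty₀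
    {m : X → X | (∀ x, f (m x) ≤ f x) ∧ ∀ x x', f x' ≤ f x → m x ≤ m x'}
    (by
      intro c hc hch y hy
      have hex : ∀ x, ∃ u, f u ≤ f x ∧ (∀ z ∈ (fun g : X → X => g x) '' c, z ≤ u) ∧
          ∀ w, f w ≤ f x → (∀ z ∈ (fun g : X → X => g x) '' c, z ≤ w) → u ≤ w := by
        intro x
        refine hcc (f x) ((fun g : X → X => g x) '' c) ?_ ⟨_, y, hy, rfl⟩ ?_
        · rintro _ ⟨g, hg, rfl⟩
          exact (hc hg).1 x
        · rintro _ ⟨g, hg, rfl⟩ _ ⟨g', hg', rfl⟩ _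
          rcases hch.total hg hg' with h | h
          · exact Or.inl (h x)
          · exact Or.inr (h x)
      choose u huL hub hlub using hex
      refine ⟨u, ⟨huL, fun x x' h => hlub x _ ((huL x').trans h) ?_⟩,
        fun g hg x => hub x _ ⟨g, hg, rfl⟩⟩
      rintro _ ⟨g, hg, rfl⟩
      exact ((hc hg).2 x x' h).trans (hub x' _ ⟨g, hg, rfl⟩))
    b ⟨hbL, fun x x' h => hbl x _ ((hbL x').trans h) fun s hs => hbU x' s (h.trans hs)⟩
  have hex : ∀ x, ∃ u, f u ≤ f x ∧ (∀ z ∈ m '' {x' | f x' ≤ f x}, z ≤ u) ∧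
      ∀ w, f w ≤ f x → (∀ z ∈ m '' {x' | f x' ≤ f x}, z ≤ w) → u ≤ w := by
    intro x
    refine hcc (f x) (m '' {x' | f x' ≤ f x}) ?_ ⟨_, x, le_rfl, rfl⟩ ?_
    · rintro _ ⟨g, hg, rfl⟩
      exact (hm.prop.1 g).trans hg
    · rintro _ ⟨g, hg, rfl⟩ _ ⟨g', hg', rfl⟩ _
      rcases le_total (f g) (f g') with h | h
      · exact Or.inr (hm.prop.2 _ _ h)
      · exact Or.inl (hm.prop.2 _ _ h)
  choose u huL hub hlub using hex
  have hum : u ≤ m := by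
    refine hm.le_of_ge ⟨huL, fun x x' h => hlub x _ ((huL x').trans h) ?_⟩
      (fun x => hub x _ ⟨x, le_rfl, rfl⟩)
    rintro _ ⟨g, hg, rfl⟩
    rcases le_total (f g) (f x') with h' | h'
    · exact hub x' _ ⟨g, h', rfl⟩
    · exact (hm.prop.2 _ _ h').trans (hub x' _ ⟨x', le_rfl, rfl⟩)
  have hconst : ∀ x x', f x' ≤ f x → m x = m x' := fun x x' h =>
    le_antisymm (hm.prop.2 x x' h) ((hub x _ ⟨x', h, rfl⟩).trans (hum x))
  obtain ⟨x₀⟩ := ‹Nonempty X›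
  refine ⟨m x₀, fun y => ?_⟩
  have : m x₀ = m y := by
    rcases le_total (f x₀) (f y) with h | h
    · exact (hconst _ _ h).symm
    · exact hconst _ _ h
  rw [this]
  exact hm.prop.1 y
end

section
/- Let X be a nonempty lattice, C a linearly ordered set, and f : X → C a meet-superextremal map. Suppose that for every t ∈ C, the upper level set [f ≥ t] = {x ∈ X : f(x) ≥ t}, with the order induced from X, is chain-complete downwards and, whenever nonempty, has a maximal element. Then the set argmax f of maximizers of f is a nonempty quasisublattice of X. -/
/-- Iwamura-type lemma: a meet-closed subset of a set that is chain-complete downwards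
has an infimum in that set. -/
theorem exists_glb_of_subset_infClosed {X : Type*} [Lattice X] {A F : Set X}
    (hA : ChainCompleteDownwardsOn A) (hFA : F ⊆ A)
    (hF : ∀ p ∈ F, ∀ q ∈ F, p ⊓ q ∈ F) :
    ∀ (κ : Cardinal) (S : Set X), Cardinal.mk S = κ → S ⊆ F → S.Nonempty →
      ∃ m ∈ A, (∀ x ∈ S, m ≤ x) ∧ ∀ b ∈ A, (∀ x ∈ S, b ≤ x) → b ≤ m := by
  intro κ
  induction κ using WellFoundedLT.induction with
  | ind κ ih =>
  intro S hS hSF hne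
  by_cases hfin : S.Finite
  · have key : ∃ m ∈ F, (∀ x ∈ S, m ≤ x) ∧ ∀ b, (∀ x ∈ S, b ≤ x) → b ≤ m := by
      clear hS ih
      induction S, hfin using Set.Finite.induction_on with
      | empty => exact absurd hne Set.not_nonempty_empty
      | @insert a T _ _ ihT =>
        have ha : a ∈ F := hSF (Set.mem_insert _ _)
        rcases T.eq_empty_or_nonempty with rfl | hT
        · exact ⟨a, ha, by simp, by simp⟩
        · obtain ⟨m, hm, h1, h2⟩ := ihT (fun x hx => hSF (Set.mem_insert_of_mem _ hx)) hT
          refine ⟨a ⊓ m, hF _ ha _ hm, ?_, ?_⟩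
          · rintro x (rfl | hx)
            · exact inf_le_left
            · exact inf_le_right.trans (h1 x hx)
          · intro b hb
            exact le_inf (hb a (Set.mem_insert _ _))
              (h2 b fun x hx => hb x (Set.mem_insert_of_mem _ hx))
    obtain ⟨m, hm, h1, h2⟩ := key
    exact ⟨m, hFA hm, h1, fun b _ hb => h2 b hb⟩
  · have hinf : Cardinal.aleph0 ≤ κ := by
      rw [← hS]
      have : Infinite S := Set.infinite_coe_iff.2 hfin
      exact Cardinal.aleph0_le_mk _
    obtain ⟨r, wo, hr⟩ := Cardinal.ord_eq S
    let T : S → Set X := fun a => Subtype.val '' (insert a {b : S | r b a})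
    have hTS : ∀ a, T a ⊆ S := by
      rintro a _ ⟨b, _, rfl⟩
      exact b.2
    have hcard : ∀ a, Cardinal.mk (T a) < κ := by
      intro a
      refine (Cardinal.mk_image_le).trans_lt ?_
      refine (Cardinal.mk_insert_le).trans_lt ?_
      refine Cardinal.add_lt_of_lt hinf ?_ (Cardinal.one_lt_aleph0.trans_le hinf)
      rw [← hS]
      exact Cardinal.card_typein_lt a hr
    have hmemT : ∀ a : S, a.1 ∈ T a := fun a => ⟨a, Set.mem_insert _ _, rfl⟩
    have hex := fun a => ih _ (hcard a) (T a) rfl ((hTS a).trans hSF) ⟨a.1, hmemT a⟩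
    choose g hgA hg1 hg2 using hex
    have hTmono : ∀ a b, r a b → T a ⊆ T b := by
      rintro a b hab _ ⟨c, hc, rfl⟩
      refine ⟨c, ?_, rfl⟩
      rcases hc with rfl | hc
      · exact Or.inr hab
      · exact Or.inr (_root_.trans (r := r) hc hab)
    have hgmono : ∀ a b, r a b → g b ≤ g a := fun a b hab =>
      hg2 a _ (hgA b) fun x hx => hg1 b x (hTmono a b hab hx)
    have hchain : IsChain (· ≤ ·) (Set.range g) := by
      rintro _ ⟨a, rfl⟩ _ ⟨b, rfl⟩ _
      rcases trichotomous_of r a b with h | rfl | h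
      · exact Or.inr (hgmono _ _ h)
      · exact Or.inl le_rfl
      · exact Or.inl (hgmono _ _ h)
    obtain ⟨x0, hx0⟩ := hne
    obtain ⟨m, hm, h1, h2⟩ := hA (Set.range g) (by rintro _ ⟨a, rfl⟩; exact hgA a)
      ⟨_, ⟨x0, hx0⟩, rfl⟩ hchain
    refine ⟨m, hm, ?_, ?_⟩
    · intro x hx
      exact (h1 _ ⟨⟨x, hx⟩, rfl⟩).trans (hg1 _ _ (hmemT ⟨x, hx⟩))
    · intro b hb hbS
      refine h2 b hb ?_
      rintro _ ⟨a, rfl⟩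
      exact hg2 a b hb fun x hx => hbS x (hTS a hx)

/-- Corollary 3.5 (2): if `f : X → C` is meet-superextremal from a nonempty lattice to a
chain and every upper level set `[f ≥ t]` is chain-complete downwards and (when nonempty)
admits a maximal element, then `argmax f` is a nonempty quasisublattice of `X`. -/
theorem argmax_nonempty_quasisublattice_of_meetSuperextremal {X C : Type*} [Lattice X]
    [Nonempty X] [LinearOrder C] (f : X → C) (hf : MeetSuperextremal f)
    (hcc : ∀ t : C, ChainCompleteDownwardsOn {x : X | t ≤ f x})
    (hmax : ∀ t : C, ({x : X | t ≤ f x}).Nonempty → HasMaximalOn {x : X | t ≤ f x}) :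
    ({x : X | ∀ y : X, f y ≤ f x}).Nonempty ∧ Quasisublattice {x : X | ∀ y : X, f y ≤ f x} := by
  constructor
  swap
  · intro x hx y hy
    rcases hf x y with h | h
    · exact Or.inl fun z => (hx z).trans h
    · exact Or.inr fun z => (le_inf (hx z) (hy z)).trans h
  -- strongly good elements at the level of `x`
  let F : X → Set X := fun x => {p | f x ≤ f p ∧ ∀ y, f x ≤ f y → f y ≤ f (y ⊓ p)}
  have hFinf : ∀ x y, f x ≤ f y → ∀ p ∈ F x, ∀ q ∈ F y, q ⊓ p ∈ F y := by
    intro x y hxy p hp q hq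
    refine ⟨hq.1.trans (hp.2 q (hxy.trans hq.1)), fun z hz => ?_⟩
    rw [← inf_assoc]
    have h1 := hq.2 z hz
    exact h1.trans (hp.2 _ (hxy.trans (hz.trans h1)))
  have hFne : ∀ x, (F x).Nonempty := by
    intro x
    obtain ⟨m, hm, hmm⟩ := hmax (f x) ⟨x, le_rfl⟩
    refine ⟨m, hm, fun y hy => ?_⟩
    rcases hf y m with h | h
    · exact h
    · have h3 := hmm (y ⊔ m) ((le_inf hy hm).trans h) le_sup_right
      rw [inf_eq_left.2 (sup_eq_right.1 h3)]
  have hc := fun x => exists_glb_of_subset_infClosed (hcc (f x)) (F := F x)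
    (fun p hp => hp.1) (fun p hp q hq => hFinf x x le_rfl q hq p hp) _ (F x) rfl
    subset_rfl (hFne x)
  choose c hcA hc1 hc2 using hc
  let P : Set (X → X)ᵒᵈ := {g | (∀ x, f x ≤ f (OrderDual.ofDual g x)) ∧
    ∀ x y, f x ≤ f y → OrderDual.ofDual g y ≤ OrderDual.ofDual g x}
  have hcP : OrderDual.toDual c ∈ P := by
    refine ⟨hcA, fun x y hxy => hc2 x _ (hxy.trans (hcA y)) fun p hp => ?_⟩
    obtain ⟨q, hq⟩ := hFne y
    exact (hc1 y _ (hFinf x y hxy p hp q hq)).trans inf_le_right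
  obtain ⟨g, -, hg⟩ := zorn_le_nonempty₀ P (by
    intro K hKP hK g0 hg0
    have hex := fun x => hcc (f x) ((fun g : (X → X)ᵒᵈ => OrderDual.ofDual g x) '' K)
      (by rintro _ ⟨g, hg, rfl⟩; exact (hKP hg).1 x) ⟨_, g0, hg0, rfl⟩
      (by
        rintro _ ⟨g, hg, rfl⟩ _ ⟨h, hh, rfl⟩ _
        rcases hK.total hg hh with h1 | h1
        · exact Or.inr (h1 x)
        · exact Or.inl (h1 x))
    choose j hjA hj1 hj2 using hex
    refine ⟨OrderDual.toDual j, ⟨hjA, fun x y hxy => ?_⟩, fun g hg x => hj1 x _ ⟨g, hg, rfl⟩⟩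
    refine hj2 x _ (hxy.trans (hjA y)) ?_
    rintro _ ⟨g, hg, rfl⟩
    exact (hj1 y _ ⟨g, hg, rfl⟩).trans ((hKP hg).2 x y hxy)) _ hcP
  obtain ⟨hgA, hgm⟩ := hg.prop
  have hex := fun x => hcc (f x) (OrderDual.ofDual g '' {y | f x ≤ f y})
    (by rintro _ ⟨y, hy, rfl⟩; exact le_trans hy (hgA y)) ⟨_, x, le_rfl, rfl⟩
    (by
      rintro _ ⟨y, _, rfl⟩ _ ⟨z, _, rfl⟩ _
      rcases le_total (f y) (f z) with h | h
      · exact Or.inr (hgm _ _ h)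
      · exact Or.inl (hgm _ _ h))
  choose i hiA hi1 hi2 using hex
  have hiall : ∀ x y, i x ≤ OrderDual.ofDual g y := by
    intro x y
    rcases le_total (f x) (f y) with h | h
    · exact hi1 x _ ⟨y, h, rfl⟩
    · exact (hi1 x _ ⟨x, le_rfl, rfl⟩).trans (hgm _ _ h)
  have hiP : OrderDual.toDual i ∈ P := by
    refine ⟨hiA, fun x y hxy => hi2 x _ (hxy.trans (hiA y)) ?_⟩
    rintro _ ⟨z, _, rfl⟩
    exact hiall y z
  have hle : ∀ x, OrderDual.ofDual g x ≤ i x := hg.le_of_ge hiP (fun x => hiall x x)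
  have hconst : ∀ x y, OrderDual.ofDual g x ≤ OrderDual.ofDual g y :=
    fun x y => (hle x).trans (hiall x y)
  obtain ⟨x0⟩ := ‹Nonempty X›
  refine ⟨OrderDual.ofDual g x0, fun y => ?_⟩
  rw [le_antisymm (hconst x0 y) (hconst y x0)]
  exact hgA y
end

section
/- Let X be a nonempty lattice, C a linearly ordered set, and f : X → C a join-superextremal map. Suppose that for every t ∈ C, the upper level set [f ≥ t] = {x ∈ X : f(x) ≥ t}, with the order induced from X, is chain-complete upwards and, whenever nonempty, has a minimal element. Then the set argmax f of maximizers of f is a nonempty quasisublattice of X. -/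
/-- Corollary 3.5 (3): if `f : X → C` is join-superextremal from a nonempty lattice to a
chain and every upper level set `[f ≥ t]` is chain-complete upwards and (when nonempty)
admits a minimal element, then `argmax f` is a nonempty quasisublattice of `X`. -/
theorem argmax_nonempty_quasisublattice_of_joinSuperextremal {X C : Type*} [Lattice X]
    [Nonempty X] [LinearOrder C] (f : X → C) (hf : JoinSuperextremal f)
    (hcc : ∀ t : C, ChainCompleteUpwardsOn {x : X | t ≤ f x})
    (hmin : ∀ t : C, ({x : X | t ≤ f x}).Nonempty → HasMinimalOn {x : X | t ≤ f x}) :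
    ({x : X | ∀ y : X, f y ≤ f x}).Nonempty ∧ Quasisublattice {x : X | ∀ y : X, f y ≤ f x} := by
  refine ⟨?_, ?_⟩
  swap
  · intro x hx y hy
    rcases hf x y with h | h
    · left
      intro z
      exact (le_inf (hx z) (hy z)).trans h
    · right
      intro z
      exact (hx z).trans h
  -- minimal elements of the level sets
  have hm : ∀ a : X, HasMinimalOn {x : X | f a ≤ f x} := fun a => hmin (f a) ⟨a, le_refl (f a)⟩
  choose x hx hxm using hm
  simp only [Set.mem_ofPred_eq] at hx hxm
  -- joining with a minimal element does not decrease f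
  have hjoin : ∀ a y, f a ≤ f y → f y ≤ f (y ⊔ x a) := by
    intro a y hy
    rcases hf y (x a) with h | h
    · have h1 := hxm a (y ⊓ x a) ((le_inf hy (hx a)).trans h) inf_le_right
      rw [sup_eq_left.mpr (inf_eq_right.mp h1)]
    · exact h
  -- least upper bounds of the minimal elements inside the level sets
  have hw : ∀ a : X, ∃ w : X, f a ≤ f w ∧ (∀ b, f b ≤ f a → x b ≤ w) ∧
      ∀ u, f a ≤ f u → (∀ b, f b ≤ f a → x b ≤ u) → w ≤ u := by
    intro a
    let P : Set X := {y | f a ≤ f y ∧ ∀ u, f a ≤ f u → (∀ b, f b ≤ f a → x b ≤ u) → y ≤ u}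
    have hP : x a ∈ P := ⟨hx a, fun u _ h => h a le_rfl⟩
    obtain ⟨w, -, hwm⟩ := zorn_le_nonempty₀ P (by
      intro c hcP hc y hy
      obtain ⟨m, hmA, hub, hl⟩ := hcc (f a) c (fun z hz => (hcP hz).1) ⟨y, hy⟩ hc
      exact ⟨m, ⟨hmA, fun u hu hb => hl u hu fun z hz => (hcP hz).2 u hu hb⟩, hub⟩) (x a) hP
    refine ⟨w, hwm.prop.1, ?_, hwm.prop.2⟩
    intro b hb
    have hmem : w ⊔ x b ∈ P :=
      ⟨hwm.prop.1.trans (hjoin b w (hb.trans hwm.prop.1)),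
        fun u hu h => sup_le (hwm.prop.2 u hu h) (h b hb)⟩
    exact le_sup_right.trans (hwm.le_of_ge hmem le_sup_left)
  choose w hw1 hw2 hw3 using hw
  -- a maximal monotone selection is constant
  let S : Set (X → X) := {g | (∀ a, f a ≤ f (g a)) ∧ ∀ a b, f a ≤ f b → g a ≤ g b}
  have hwS : w ∈ S := ⟨hw1, fun a b hab =>
    hw3 a _ (hab.trans (hw1 b)) fun d hd => hw2 b d (hd.trans hab)⟩
  obtain ⟨g, -, hg⟩ := zorn_le_nonempty₀ S (by
    intro c hcS hc y hy
    have key : ∀ a : X, ∃ m, f a ≤ f m ∧ (∀ h ∈ c, h a ≤ m) ∧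
        ∀ u, f a ≤ f u → (∀ h ∈ c, h a ≤ u) → m ≤ u := by
      intro a
      obtain ⟨m, h1, h2, h3⟩ := hcc (f a) (Set.image (fun h : X → X => h a) c)
        (by rintro _ ⟨h, hh, rfl⟩; exact (hcS hh).1 a) ⟨_, y, hy, rfl⟩
        (by
          rintro _ ⟨h, hh, rfl⟩ _ ⟨k, hk, rfl⟩ -
          rcases hc.total hh hk with e | e
          · exact Or.inl (e a)
          · exact Or.inr (e a))
      exact ⟨m, h1, fun h hh => h2 _ ⟨h, hh, rfl⟩, fun u hu hb =>
        h3 u hu (by rintro _ ⟨h, hh, rfl⟩; exact hb h hh)⟩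
    choose m h1 h2 h3 using key
    exact ⟨m, ⟨h1, fun a b hab => h3 a _ (hab.trans (h1 b)) fun h hh =>
      ((hcS hh).2 a b hab).trans (h2 b h hh)⟩, fun h hh a => h2 a h hh⟩) w hwS
  have hgS := hg.prop
  have key : ∀ a : X, ∃ m, f a ≤ f m ∧ (∀ b, g b ≤ m) ∧
      ∀ u, f a ≤ f u → (∀ b, g b ≤ u) → m ≤ u := by
    intro a
    obtain ⟨m, h1, h2, h3⟩ := hcc (f a) (Set.image g {b | f a ≤ f b})
      (by rintro _ ⟨b, hb, rfl⟩; exact le_trans hb (hgS.1 b)) ⟨_, a, le_refl (f a), rfl⟩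
      (by
        rintro _ ⟨b, hb, rfl⟩ _ ⟨d, hd, rfl⟩ -
        rcases le_total (f b) (f d) with e | e
        · exact Or.inl (hgS.2 _ _ e)
        · exact Or.inr (hgS.2 _ _ e))
    refine ⟨m, h1, fun b => ?_, fun u hu hb => h3 u hu (by rintro _ ⟨b, _, rfl⟩; exact hb b)⟩
    rcases le_total (f a) (f b) with e | e
    · exact h2 _ ⟨b, e, rfl⟩
    · exact (hgS.2 _ _ e).trans (h2 _ ⟨a, le_refl (f a), rfl⟩)
  choose m h1 h2 h3 using key
  have hmS : m ∈ S := ⟨h1, fun a b hab => h3 a _ (hab.trans (h1 b)) (h2 b)⟩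
  have hle : m ≤ g := hg.le_of_ge hmS fun a => h2 a a
  obtain ⟨a⟩ := ‹Nonempty X›
  refine ⟨g a, fun y => ?_⟩
  have e : g y = g a := le_antisymm ((h2 a y).trans (hle a)) ((h2 y a).trans (hle y))
  rw [← e]
  exact hgS.1 y
end

section
/- Consider a normal form game with nonempty player set N, strategy sets S_i and payoff functions u_i : ∏_j S_j → C_i with each C_i a linearly ordered set. Assume that for every i ∈ N: (1) S_i is a complete lattice; (2) for every s_{-i} ∈ S_{-i}, the section u_i(·, s_{-i}) : S_i → C_i is meet-superextremal; (3) u_i is modular-crossing relative to (S_i, S_{-i}); (4) for every s_{-i} ∈ S_{-i} and every t ∈ C_i, the set [u_i(·, s_{-i}) ≥ t] = {a ∈ S_i : u_i(a, s_{-i}) ≥ t}, with the order induced from S_i, is chain-complete downwards and, whenever nonempty, has a maximal element. Then the game admits a Nash equilibrium. -/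
open Classical in
/-- Combine a strategy `a` of player `i` with a joint strategy `t` of the other players
into a joint strategy of all players. -/
noncomputable def combine {N : Type*} {S : N → Type*} (i : N) (a : S i)
    (t : ∀ j : {j : N // j ≠ i}, S j.1) : ∀ j, S j :=
  fun j => if h : j = i then cast (congrArg S h.symm) a else t ⟨j, h⟩

/-- A joint strategy `x` is a Nash equilibrium: no player `i` can improve the payoff
`u i x` by a unilateral deviation `y`. -/
def IsNashEquilibrium {N : Type*} {S : N → Type*} {C : N → Type*} [∀ i, LinearOrder (C i)]
    (u : ∀ i, (∀ j, S j) → C i) (x : ∀ j, S j) : Prop :=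
  ∀ i, ∀ y : S i, u i (combine i y (fun j => x j.1)) ≤ u i x

lemma exists_minimal_of_cc {X : Type*} [PartialOrder X] (A : Set X)
    (h : ChainCompleteDownwardsOn A) (hne : A.Nonempty) :
    ∃ m ∈ A, ∀ x ∈ A, x ≤ m → x = m := by
  obtain ⟨x0, hx0⟩ := hne
  obtain ⟨m, -, hm⟩ := zorn_le_nonempty₀ (α := Xᵒᵈ) (OrderDual.ofDual ⁻¹' A)
    (by
      intro c hc hch y hy
      obtain ⟨m, hm, h1, -⟩ := h (OrderDual.toDual ⁻¹' c) (fun x hx => hc hx) ⟨_, hy⟩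
        (fun a ha b hb hab => (hch ha hb hab).symm)
      exact ⟨OrderDual.toDual m, hm, fun z hz => h1 z hz⟩) (OrderDual.toDual x0) hx0
  refine ⟨OrderDual.ofDual m, hm.1, fun x hx hxm => ?_⟩
  exact le_antisymm hxm (hm.2 (y := OrderDual.toDual x) hx hxm)

/-- Monotone selection from a family of sets. -/
lemma exists_selection {T X : Type*} [CompleteLattice X] (r : T → T → Prop)
    (hrefl : ∀ t, r t t) (htrans : ∀ s t v, r s t → r t v → r s v) (A : T → Set X)
    (hcc : ∀ t, ChainCompleteDownwardsOn (A t)) (hmax : ∀ t, HasMaximalOn (A t))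
    (hd : ∀ s t, r s t → ∀ x ∈ A s, ∀ y ∈ A t, x ⊓ y ∈ A s ∨ x ⊔ y ∈ A t) :
    ∃ g : T → X, (∀ t, g t ∈ A t) ∧ ∀ s t, r s t → g s ≤ g t := by
  choose m hmA hmm using hmax
  have hinf : ∀ s t, r s t → ∀ x ∈ A s, x ⊓ m t ∈ A s := by
    intro s t hst x hx
    rcases hd s t hst x hx (m t) (hmA t) with h | h
    · exact h
    · have h2 := hmm t _ h le_sup_right
      have h3 : x ≤ m t := by rw [← h2]; exact le_sup_left
      rwa [inf_eq_left.2 h3]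
  -- good systems of lower bounds
  let Good : (T → X) → Prop := fun g =>
    (∀ s t, r s t → g s ≤ g t) ∧ (∀ t, g t ≤ m t) ∧
    (∀ t, ∀ c ⊆ A t, c.Nonempty → IsChain (· ≤ ·) c → (∀ x ∈ c, g t ≤ x) →
      ∀ n ∈ A t, (∀ x ∈ c, n ≤ x) → (∀ b ∈ A t, (∀ x ∈ c, b ≤ x) → b ≤ n) → g t ≤ n)
  let G : T → X := fun t => sSup {a | ∃ g, Good g ∧ g t = a}
  have hle : ∀ g, Good g → ∀ t, g t ≤ G t := fun g hg t => le_sSup ⟨g, hg, rfl⟩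
  have hG : Good G := by
    refine ⟨fun s t hst => sSup_le ?_, fun t => sSup_le ?_, ?_⟩
    · rintro _ ⟨g, hg, rfl⟩
      exact (hg.1 s t hst).trans (hle g hg t)
    · rintro _ ⟨g, hg, rfl⟩
      exact hg.2.1 t
    · intro t c hcA hne hch hlb n hn h1 h2
      refine sSup_le ?_
      rintro _ ⟨g, hg, rfl⟩
      exact hg.2.2 t c hcA hne hch (fun x hx => (hle g hg t).trans (hlb x hx)) n hn h1 h2
  let V : T → Set X := fun t => {a | a ∈ A t ∧ G t ≤ a}
  have hVcc : ∀ t, ChainCompleteDownwardsOn (V t) := by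
    intro t c hc hne hch
    obtain ⟨n, hn, h1, h2⟩ := hcc t c (fun x hx => (hc hx).1) hne hch
    exact ⟨n, ⟨hn, hG.2.2 t c (fun x hx => (hc hx).1) hne hch (fun x hx => (hc hx).2) n hn h1 h2⟩,
      h1, fun b hb => h2 b hb.1⟩
  let H : T → X := fun t => sSup {b | ∃ s, r s t ∧ b ∈ V s ∧ ∀ x ∈ V s, x ≤ b → x = b}
  have hmin : ∀ t, ∃ b ∈ V t, ∀ x ∈ V t, x ≤ b → x = b := fun t =>
    exists_minimal_of_cc (V t) (hVcc t) ⟨m t, hmA t, hG.2.1 t⟩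
  have hbH : ∀ t, ∀ b ∈ V t, (∀ x ∈ V t, x ≤ b → x = b) → b ≤ H t := fun t b hb hb' =>
    le_sSup ⟨t, hrefl t, hb, hb'⟩
  have hGH : ∀ t, G t ≤ H t := by
    intro t
    obtain ⟨b, hb, hb'⟩ := hmin t
    exact hb.2.trans (hbH t b hb hb')
  have hH : Good H := by
    refine ⟨fun s t hst => sSup_le ?_, fun t => sSup_le ?_, ?_⟩
    · rintro b ⟨s', hs', hb⟩
      exact le_sSup ⟨s', htrans _ _ _ hs' hst, hb⟩
    · rintro b ⟨s, hst, hb, hb'⟩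
      have := hb' (b ⊓ m t) ⟨hinf s t hst b hb.1,
        le_inf hb.2 ((hG.1 s t hst).trans (hG.2.1 t))⟩ inf_le_left
      exact inf_eq_left.1 this
    · intro t c hcA hne hch hlb n hn h1 h2
      have hnG : G t ≤ n := hG.2.2 t c hcA hne hch (fun x hx => (hGH t).trans (hlb x hx)) n hn h1 h2
      refine sSup_le ?_
      rintro b ⟨s, hst, hb, hb'⟩
      rcases hd s t hst b hb.1 n hn with h | h
      · exact inf_eq_left.1 (hb' (b ⊓ n) ⟨h, le_inf hb.2 ((hG.1 s t hst).trans hnG)⟩ inf_le_left)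
      · refine le_sup_left.trans (h2 _ h fun x hx => sup_le ?_ (h1 x hx))
        have hbt : b ≤ H t := le_sSup ⟨s, hst, hb, hb'⟩
        exact hbt.trans (hlb x hx)
  refine ⟨G, fun t => ?_, hG.1⟩
  obtain ⟨b, hb, hb'⟩ := hmin t
  have : b = G t := le_antisymm ((hbH t b hb hb').trans (hle H hH t)) hb.2
  rw [← this]; exact hb.1

/-- A meet-superextremal function with good level sets attains its maximum. -/
lemma exists_max {X C : Type*} [CompleteLattice X] [LinearOrder C] (f : X → C)
    (hs : MeetSuperextremal f) (hcc : ∀ c, ChainCompleteDownwardsOn {a | c ≤ f a})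
    (hmax : ∀ c, ({a | c ≤ f a}).Nonempty → HasMaximalOn {a | c ≤ f a}) :
    ∃ x, ∀ y, f y ≤ f x := by
  obtain ⟨g, hg, hgm⟩ := exists_selection (T := X) (fun s t => f t ≤ f s) (fun _ => le_rfl)
    (fun s t v h1 h2 => le_trans h2 h1) (fun y => {a | f y ≤ f a}) (fun y => hcc _)
    (fun y => hmax _ ⟨y, le_refl (f y)⟩)
    (by
      intro s t hst x hx y hy
      simp only [Set.mem_ofPred_eq] at *
      rcases hs x y with h | h
      · exact Or.inl (hx.trans h)
      · exact Or.inr (le_trans (le_inf (hst.trans hx) hy) h))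
  let Z : Set (X → X) := {z | (∀ y, f y ≤ f (z y)) ∧ ∀ s t, f t ≤ f s → z s ≤ z t}
  have hZ : ChainCompleteDownwardsOn Z := by
    intro c hc hne hch
    have key : ∀ y, ∃ n ∈ {a | f y ≤ f a}, (∀ x ∈ (fun z : X → X => z y) '' c, n ≤ x) ∧
        ∀ b ∈ {a | f y ≤ f a}, (∀ x ∈ (fun z : X → X => z y) '' c, b ≤ x) → b ≤ n := by
      intro y
      refine hcc (f y) _ ?_ (hne.image _) ?_
      · rintro _ ⟨z, hz, rfl⟩
        exact (hc hz).1 y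
      · rintro _ ⟨z, hz, rfl⟩ _ ⟨w, hw, rfl⟩ -
        rcases hch.total hz hw with h | h
        · exact Or.inl (h y)
        · exact Or.inr (h y)
    choose n hn h1 h2 using key
    refine ⟨n, ⟨hn, fun s t hst => h2 t _ (hst.trans (hn s)) ?_⟩, ?_, ?_⟩
    · rintro _ ⟨z, hz, rfl⟩
      exact (h1 s _ ⟨z, hz, rfl⟩).trans ((hc hz).2 s t hst)
    · intro z hz y
      exact h1 y _ ⟨z, hz, rfl⟩
    · intro b hb hbl y
      refine h2 y _ (hb.1 y) ?_
      rintro _ ⟨z, hz, rfl⟩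
      exact hbl z hz y
  obtain ⟨z, hz, hzm⟩ := exists_minimal_of_cc Z hZ ⟨g, hg, hgm⟩
  have key : ∀ y, ∃ n ∈ {a | f y ≤ f a}, (∀ x ∈ z '' {s | f y ≤ f s}, n ≤ x) ∧
        ∀ b ∈ {a | f y ≤ f a}, (∀ x ∈ z '' {s | f y ≤ f s}, b ≤ x) → b ≤ n := by
    intro y
    refine hcc (f y) _ ?_ ⟨_, y, le_refl (f y), rfl⟩ ?_
    · rintro _ ⟨s, hs, rfl⟩
      exact le_trans hs (hz.1 s)
    · rintro _ ⟨s, hs, rfl⟩ _ ⟨t, ht, rfl⟩ -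
      rcases le_total (f s) (f t) with h | h
      · exact Or.inr (hz.2 _ _ h)
      · exact Or.inl (hz.2 _ _ h)
  choose n hn h1 h2 using key
  have hall : ∀ y s, n y ≤ z s := by
    intro y s
    rcases le_total (f y) (f s) with h | h
    · exact h1 y _ ⟨s, h, rfl⟩
    · exact (h1 y _ ⟨y, le_refl (f y), rfl⟩).trans (hz.2 _ _ h)
  have hnz : n = z := by
    refine hzm n ⟨hn, fun s t hst => h2 t _ (hst.trans (hn s)) ?_⟩ (fun y => hall y y)
    rintro _ ⟨v, -, rfl⟩
    exact hall s v
  subst hnz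
  refine ⟨n ⊤, fun y => ?_⟩
  have : n y = n ⊤ := le_antisymm (hall _ _) (hall _ _)
  rw [← this]; exact hn y

/-- Theorem 4.5: a normal form game in which every strategy set is a complete lattice,
every section of a payoff function is meet-superextremal, every payoff function is
modular-crossing, and every upper level set of a section is chain-complete downwards
with maximal elements when nonempty, admits a Nash equilibrium. -/
theorem exists_nashEquilibrium {N : Type*} [Nonempty N] {S : N → Type*}
    [∀ i, CompleteLattice (S i)] {C : N → Type*} [∀ i, LinearOrder (C i)]
    (u : ∀ i, (∀ j, S j) → C i)
    (hsuper : ∀ i, ∀ t : ∀ j : {j : N // j ≠ i}, S j.1,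
      MeetSuperextremal (fun a : S i => u i (combine i a t)))
    (hmc : ∀ i, ∀ a a' : S i, a < a' → ∀ t t' : (∀ j : {j : N // j ≠ i}, S j.1), t < t' →
      u i (combine i a t) ≤ u i (combine i a' t) →
      u i (combine i a t') ≤ u i (combine i a' t'))
    (hcc : ∀ i, ∀ t : ∀ j : {j : N // j ≠ i}, S j.1, ∀ c : C i,
      ChainCompleteDownwardsOn {a : S i | c ≤ u i (combine i a t)})
    (hmax : ∀ i, ∀ t : ∀ j : {j : N // j ≠ i}, S j.1, ∀ c : C i,
      ({a : S i | c ≤ u i (combine i a t)}).Nonempty →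
        HasMaximalOn {a : S i | c ≤ u i (combine i a t)}) :
    ∃ x : ∀ j, S j, IsNashEquilibrium u x := by
  let A : ∀ i, (∀ j : {j : N // j ≠ i}, S j.1) → Set (S i) := fun i t =>
    {a | ∀ b, u i (combine i b t) ≤ u i (combine i a t)}
  have hA : ∀ i t, ∃ c : C i, A i t = {a : S i | c ≤ u i (combine i a t)} ∧ (A i t).Nonempty := by
    intro i t
    obtain ⟨x, hx⟩ := exists_max _ (hsuper i t) (hcc i t) (hmax i t)
    refine ⟨u i (combine i x t), ?_, x, hx⟩
    ext a
    exact ⟨fun h => h x, fun h b => (hx b).trans h⟩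
  have hsel : ∀ i, ∃ g : (∀ j : {j : N // j ≠ i}, S j.1) → S i,
      (∀ t, g t ∈ A i t) ∧ ∀ s t, s ≤ t → g s ≤ g t := by
    intro i
    refine exists_selection (fun s t => s ≤ t) (fun _ => le_rfl) (fun s t v => le_trans) (A i)
      ?_ ?_ ?_
    · intro t
      obtain ⟨c, hc, -⟩ := hA i t
      rw [hc]; exact hcc i t c
    · intro t
      obtain ⟨c, hc, hne⟩ := hA i t
      rw [hc] at hne ⊢; exact hmax i t c hne
    · intro s t hst x hx y hy
      rcases hsuper i s x y with h | h
      · exact Or.inl fun b => (hx b).trans h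
      · right
        have h' : u i (combine i y s) ≤ u i (combine i (x ⊔ y) s) :=
          le_trans (le_inf (hx y) le_rfl) h
        have h'' : u i (combine i y t) ≤ u i (combine i (x ⊔ y) t) := by
          rcases hst.eq_or_lt with rfl | hlt
          · exact h'
          · rcases (le_sup_right : y ≤ x ⊔ y).eq_or_lt with he | hl
            · rw [← he]
            · exact hmc i _ _ hl _ _ hlt h'
        exact fun b => (hy b).trans h''
  choose g hg hmono using hsel
  let Φ : (∀ j, S j) →o (∀ j, S j) :=
    ⟨fun x i => g i (fun j => x j.1), fun x y hxy i => hmono i _ _ (fun j => hxy j.1)⟩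
  refine ⟨Φ.lfp, fun i y => ?_⟩
  have hfix : Φ Φ.lfp = Φ.lfp := Φ.map_lfp
  have h1 : g i (fun j => Φ.lfp j.1) = Φ.lfp i := congrFun hfix i
  have h2 : combine i (Φ.lfp i) (fun j => Φ.lfp j.1) = Φ.lfp := by
    funext j
    unfold combine
    split_ifs with h
    · subst h; rfl
    · rfl
  have h3 := hg i (fun j => Φ.lfp j.1) y
  rw [h1, h2] at h3
  exact h3
end

section
/- Consider a normal form game with nonempty player set N, strategy sets S_i and payoff functions u_i : ∏_j S_j → C_i with each C_i a linearly ordered set. Assume that for every i ∈ N: (1) S_i is a complete lattice; (2) for every s_{-i} ∈ S_{-i}, the section u_i(·, s_{-i}) : S_i → C_i is weakly pseudo-supermodular; (3) u_i is upper-crossing relative to (S_i, S_{-i}); (4) for every s_{-i} ∈ S_{-i} and every t ∈ C_i, the set [u_i(·, s_{-i}) ≥ t] = {a ∈ S_i : u_i(a, s_{-i}) ≥ t}, with the order induced from S_i, is chain-complete downwards and chain-bounded above. Then the game admits a largest Nash equilibrium, i.e., a Nash equilibrium e such that every Nash equilibrium x satisfies x ≤ e in the product order on ∏_j S_j. -/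
/-- `f` is weakly pseudo-supermodular if `f (x ⊔ y) < f x ⊓ f y → f x < f (x ⊓ y)`
for all `x, y`. -/
def WeaklyPseudoSupermodular {X C : Type*} [Lattice X] [LinearOrder C] (f : X → C) : Prop :=
  ∀ x y : X, f (x ⊔ y) < f x ⊓ f y → f x < f (x ⊓ y)

/-- A subset `A` of a poset is chain-bounded above if every nonempty chain contained
in `A` has an upper bound belonging to `A`. -/
def ChainBoundedAboveOn {X : Type*} [PartialOrder X] (A : Set X) : Prop :=
  ∀ c : Set X, c ⊆ A → c.Nonempty → IsChain (· ≤ ·) c → ∃ u ∈ A, ∀ x ∈ c, x ≤ u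

/-- For every level `e ≥ c` and every `y` in the level set, the part of the level set
below both `x` and `y` has a greatest element. -/
def RetractAt {X C : Type*} [CompleteLattice X] [LinearOrder C] (f : X → C) (x : X) (c : C) :
    Prop :=
  ∀ e, c ≤ e → ∀ y, e ≤ f y → ∃ y', IsGreatest {d | e ≤ f d ∧ d ≤ x ∧ d ≤ y} y'

lemma RetractAt.sInf_chain {X C : Type*} [CompleteLattice X] [LinearOrder C] {f : X → C}
    (hcc : ∀ c, ChainCompleteDownwardsOn {a | c ≤ f a}) {D : Set X} (hD : IsChain (· ≤ ·) D)
    {c : C} (h : ∀ x ∈ D, RetractAt f x c) : RetractAt f (sInf D) c := by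
  intro e hce y hy
  rcases D.eq_empty_or_nonempty with rfl | hne
  · exact ⟨y, ⟨hy, by simp, le_rfl⟩, fun d hd => hd.2.2⟩
  have h' : ∀ x : D, ∃ y', IsGreatest {d | e ≤ f d ∧ d ≤ x.1 ∧ d ≤ y} y' :=
    fun x => h x.1 x.2 e hce y hy
  choose g hg using h'
  have hmono : ∀ a b : D, a.1 ≤ b.1 → g a ≤ g b := fun a b hab =>
    (hg b).2 ⟨(hg a).1.1, (hg a).1.2.1.trans hab, (hg a).1.2.2⟩
  have hchain : IsChain (· ≤ ·) (Set.range g) := by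
    rintro _ ⟨a, rfl⟩ _ ⟨b, rfl⟩ _
    rcases hD.total a.2 b.2 with hab | hab
    · exact Or.inl (hmono a b hab)
    · exact Or.inr (hmono b a hab)
  obtain ⟨x0, hx0⟩ := hne
  obtain ⟨m, hm, hmle, hmg⟩ := hcc e (Set.range g) (by rintro _ ⟨a, rfl⟩; exact (hg a).1.1)
    ⟨g ⟨x0, hx0⟩, ⟨x0, hx0⟩, rfl⟩ hchain
  refine ⟨m, ⟨hm, le_sInf fun x hx => ?_, ?_⟩, ?_⟩
  · exact (hmle _ ⟨⟨x, hx⟩, rfl⟩).trans (hg ⟨x, hx⟩).1.2.1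
  · exact (hmle _ ⟨⟨x0, hx0⟩, rfl⟩).trans (hg ⟨x0, hx0⟩).1.2.2
  · rintro d ⟨hd1, hd2, hd3⟩
    refine hmg d hd1 ?_
    rintro _ ⟨a, rfl⟩
    exact (hg a).2 ⟨hd1, hd2.trans (sInf_le a.2), hd3⟩

lemma RetractAt.mono {X C : Type*} [CompleteLattice X] [LinearOrder C] {f : X → C} {x : X}
    {c c' : C} (h : RetractAt f x c) (hc : c ≤ c') : RetractAt f x c' :=
  fun e he => h e (hc.trans he)

lemma RetractAt.exists_maximal {X C : Type*} [CompleteLattice X] [LinearOrder C] {f : X → C}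
    (hba : ∀ c, ChainBoundedAboveOn {a | c ≤ f a}) {x : X} {c : C} (h : RetractAt f x c)
    (hne : ∃ a, c ≤ f a) : ∃ m, Maximal (fun a => c ≤ f a ∧ a ≤ x) m := by
  obtain ⟨a, ha⟩ := hne
  obtain ⟨b, hb, -⟩ := h c le_rfl a ha
  obtain ⟨m, -, hm⟩ := zorn_le_nonempty₀ {a | c ≤ f a ∧ a ≤ x} (by
    intro D hDs hD y hy
    obtain ⟨z, hz, hzD⟩ := hba c D (fun w hw => (hDs hw).1) ⟨y, hy⟩ hD
    obtain ⟨z', hz', hz'2⟩ := h c le_rfl z hz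
    exact ⟨z', ⟨hz'.1, hz'.2.1⟩, fun w hw => hz'2 ⟨(hDs hw).1, (hDs hw).2, hzD w hw⟩⟩)
    b ⟨hb.1, hb.2.1⟩
  exact ⟨m, hm⟩

lemma RetractAt.of_maximal {X C : Type*} [CompleteLattice X] [LinearOrder C] {f : X → C}
    (hw : WeaklyPseudoSupermodular f) {x m : X} {c : C} (h : RetractAt f x c)
    (hm : Maximal (fun a => c ≤ f a ∧ a ≤ x) m) : RetractAt f m c := by
  intro e hce y hy
  obtain ⟨y', ⟨h1, h2, h3⟩, hg⟩ := h e hce y hy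
  by_cases hj : c ≤ f (m ⊔ y')
  · have : y' ≤ m := le_sup_right.trans (hm.2 ⟨hj, sup_le hm.1.2 h2⟩ le_sup_left)
    exact ⟨y', ⟨h1, this, h3⟩, fun d hd => hg ⟨hd.1, hd.2.1.trans hm.1.2, hd.2.2⟩⟩
  · push Not at hj
    have h4 := hw y' m (by
      rw [sup_comm]
      exact lt_inf_iff.2 ⟨hj.trans_le (hce.trans h1), hj.trans_le hm.1.1⟩)
    exact ⟨y' ⊓ m, ⟨h1.trans h4.le, inf_le_right, inf_le_left.trans h3⟩,
      fun d hd => le_inf (hg ⟨hd.1, hd.2.1.trans hm.1.2, hd.2.2⟩) hd.2.1⟩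

/-- An antitone selection of level sets yields a common point of them. -/
lemma exists_common_of_antitone {X C : Type*} [CompleteLattice X] [LinearOrder C] {f : X → C}
    (hcc : ∀ c, ChainCompleteDownwardsOn {a | c ≤ f a}) (K : Set C) (x0 : K → X)
    (hx0 : Antitone x0) (hx0f : ∀ k : K, k.1 ≤ f (x0 k)) : ∃ a, ∀ k ∈ K, k ≤ f a := by
  rcases K.eq_empty_or_nonempty with rfl | ⟨k0, hk0⟩
  · exact ⟨⊥, by simp⟩
  let T := {x : K → X // Antitone x ∧ ∀ k : K, k.1 ≤ f (x k)}
  obtain ⟨M, hM⟩ : ∃ M : T, ∀ a : T, a ≤ M → M ≤ a := by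
    refine exists_maximal_of_chains_bounded (r := fun a b : T => b ≤ a) ?_
      (fun h1 h2 => h2.trans h1)
    intro D hD
    rcases D.eq_empty_or_nonempty with rfl | ⟨d0, hd0⟩
    · exact ⟨⟨x0, hx0, hx0f⟩, by simp⟩
    have hk : ∀ k : K, ∃ m ∈ {a | k.1 ≤ f a}, (∀ x ∈ (fun d : T => d.1 k) '' D, m ≤ x) ∧
        ∀ b ∈ {a | k.1 ≤ f a}, (∀ x ∈ (fun d : T => d.1 k) '' D, b ≤ x) → b ≤ m := by
      intro k
      refine hcc k _ ?_ ⟨_, d0, hd0, rfl⟩ ?_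
      · rintro _ ⟨d, -, rfl⟩
        exact d.2.2 k
      · rintro _ ⟨a, ha, rfl⟩ _ ⟨b, hb, rfl⟩ hab
        have hne : a ≠ b := fun h => hab (by rw [h])
        rcases hD ha hb hne with h | h
        · exact Or.inr (h k)
        · exact Or.inl (h k)
    choose m hm1 hm2 hm3 using hk
    refine ⟨⟨m, ?_, hm1⟩, fun a ha k => hm2 k _ ⟨a, ha, rfl⟩⟩
    intro k l hkl
    refine hm3 k _ (le_trans (show k.1 ≤ l.1 from hkl) (hm1 l)) ?_
    rintro _ ⟨d, hd, rfl⟩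
    exact (hm2 l _ ⟨d, hd, rfl⟩).trans (d.2.1 hkl)
  have hk : ∀ k : K, ∃ m ∈ {a | k.1 ≤ f a}, (∀ x ∈ M.1 '' Set.Ici k, m ≤ x) ∧
      ∀ b ∈ {a | k.1 ≤ f a}, (∀ x ∈ M.1 '' Set.Ici k, b ≤ x) → b ≤ m := by
    intro k
    refine hcc k _ ?_ ⟨_, k, Set.mem_Ici.2 le_rfl, rfl⟩ ?_
    · rintro _ ⟨j, hj, rfl⟩
      exact le_trans (show k.1 ≤ j.1 from hj) (M.2.2 j)
    · rintro _ ⟨a, ha, rfl⟩ _ ⟨b, hb, rfl⟩ _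
      rcases le_total a b with h | h
      · exact Or.inr (M.2.1 h)
      · exact Or.inl (M.2.1 h)
  choose m hm1 hm2 hm3 using hk
  have hall : ∀ k j : K, m k ≤ M.1 j := by
    intro k j
    rcases le_total k j with h | h
    · exact hm2 k _ ⟨j, h, rfl⟩
    · exact (hm2 k _ ⟨k, le_rfl, rfl⟩).trans (M.2.1 h)
  have hmM := hM ⟨m, by
    intro k l hkl
    refine hm3 k _ (le_trans (show k.1 ≤ l.1 from hkl) (hm1 l)) ?_
    rintro _ ⟨j, hj, rfl⟩
    exact hall l j, hm1⟩ (fun k => hall k k)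
  refine ⟨M.1 ⟨k0, hk0⟩, fun k hk => ?_⟩
  have h1 : M.1 ⟨k0, hk0⟩ = M.1 ⟨k, hk⟩ :=
    le_antisymm ((hmM _).trans (hall _ _)) ((hmM _).trans (hall _ _))
  rw [h1]
  exact M.2.2 ⟨k, hk⟩

/-- Every set in a linear order contains a cofinal well-founded subset. -/
lemma exists_wf_cofinal {C : Type*} [LinearOrder C] (V : Set C) :
    ∃ K : Set C, K ⊆ V ∧ (∀ v ∈ V, ∃ k ∈ K, v ≤ k) ∧
      WellFounded (fun a b : K => a < b) := by
  have hwf : WellFounded (WellOrderingRel : C → C → Prop) := WellOrderingRel.isWellOrder.wf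
  refine ⟨{c | c ∈ V ∧ ∀ d ∈ V, WellOrderingRel d c → d < c}, fun c hc => hc.1, ?_, ?_⟩
  · intro v hv
    have hne : {d | d ∈ V ∧ v ≤ d}.Nonempty := ⟨v, hv, le_rfl⟩
    obtain ⟨h1, h2⟩ := hwf.min_mem _ hne
    refine ⟨_, ⟨h1, fun d hd hdm => ?_⟩, h2⟩
    by_contra hcon
    push Not at hcon
    exact hwf.not_lt_min {d | d ∈ V ∧ v ≤ d} (show d ∈ {d | d ∈ V ∧ v ≤ d} from ⟨hd, h2.trans hcon⟩) hdm
  · refine Subrelation.wf (r := InvImage WellOrderingRel Subtype.val) ?_ (InvImage.wf _ hwf)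
    intro a b hab
    rcases trichotomous_of (WellOrderingRel (α := C)) a.1 b.1 with h | h | h
    · exact h
    · exact absurd (Subtype.ext h) hab.ne
    · exact absurd (a.2.2 b.1 b.2.1 h) (not_lt.2 hab.le)

open Classical in
lemma exists_argmax {X C : Type*} [CompleteLattice X] [LinearOrder C] {f : X → C}
    (hw : WeaklyPseudoSupermodular f)
    (hcc : ∀ c, ChainCompleteDownwardsOn {a | c ≤ f a})
    (hba : ∀ c, ChainBoundedAboveOn {a | c ≤ f a}) : ∃ m, ∀ a, f a ≤ f m := by
  obtain ⟨K, hKV, hKc, hwf⟩ := exists_wf_cofinal (Set.range f)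
  let g : K → X → X := fun k z =>
    if h : ∃ m, Maximal (fun a => k.1 ≤ f a ∧ a ≤ z) m then h.choose else ⊥
  let x : K → X := hwf.fix (fun k F => g k (sInf {y | ∃ j, ∃ h : j < k, F j h = y}))
  have hx : ∀ k, x k = g k (sInf {y | ∃ j, ∃ _ : j < k, x j = y}) := fun k => hwf.fix_eq _ k
  have key : ∀ k, (k.1 ≤ f (x k) ∧ RetractAt f (x k) k.1) ∧ ∀ j < k, x k ≤ x j := by
    intro k
    induction k using hwf.induction with
    | _ k ih =>
    have hR : RetractAt f (sInf {y | ∃ j, ∃ _ : j < k, x j = y}) k.1 := by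
      refine RetractAt.sInf_chain hcc ?_ ?_
      · rintro _ ⟨a, ha, rfl⟩ _ ⟨b, hb, rfl⟩ hab
        rcases lt_trichotomy a b with h | h | h
        · exact Or.inr ((ih b hb).2 a h)
        · exact absurd (by rw [h]) hab
        · exact Or.inl ((ih a ha).2 b h)
      · rintro _ ⟨a, ha, rfl⟩
        exact (ih a ha).1.2.mono (le_of_lt ha)
    have hne : ∃ a, k.1 ≤ f a := by
      obtain ⟨a, ha⟩ := hKV k.2
      exact ⟨a, ha.ge⟩
    have hex := hR.exists_maximal hba hne
    have hmax : Maximal (fun a => k.1 ≤ f a ∧ a ≤ sInf {y | ∃ j, ∃ _ : j < k, x j = y}) (x k) := by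
      rw [hx k]
      simp only [g, dif_pos hex]
      exact hex.choose_spec
    exact ⟨⟨hmax.1.1, hR.of_maximal hw hmax⟩,
      fun j hj => hmax.1.2.trans (sInf_le ⟨j, hj, rfl⟩)⟩
  have hanti : Antitone x := by
    intro a b hab
    rcases hab.eq_or_lt with h | h
    · rw [h]
    · exact (key b).2 a h
  obtain ⟨m, hm⟩ := exists_common_of_antitone hcc K x hanti (fun k => (key k).1.1)
  refine ⟨m, fun a => ?_⟩
  obtain ⟨k, hk, hak⟩ := hKc (f a) ⟨a, rfl⟩
  exact hak.trans (hm k hk)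

lemma exists_greatest_argmax {X C : Type*} [CompleteLattice X] [LinearOrder C] {f : X → C}
    (hw : WeaklyPseudoSupermodular f)
    (hcc : ∀ c, ChainCompleteDownwardsOn {a | c ≤ f a})
    (hba : ∀ c, ChainBoundedAboveOn {a | c ≤ f a}) :
    ∃ m, IsGreatest {m | ∀ a, f a ≤ f m} m := by
  obtain ⟨m, hm⟩ := exists_argmax hw hcc hba
  obtain ⟨b, hmb, hb⟩ := zorn_le_nonempty₀ {a | f m ≤ f a}
    (fun D hDs hD y hy => hba (f m) D hDs ⟨y, hy⟩ hD) m le_rfl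
  have hbm : ∀ a, f a ≤ f b := fun a => (hm a).trans hb.1
  refine ⟨b, hbm, fun y hy => ?_⟩
  have hj : f m ≤ f (b ⊔ y) := by
    by_contra hcon
    push Not at hcon
    have := hw b y (lt_inf_iff.2 ⟨hcon.trans_le (hbm m), hcon.trans_le (hy m)⟩)
    exact absurd (hbm _) (not_le.2 this)
  exact le_sup_right.trans (hb.2 hj le_sup_left)

lemma combine_self {N : Type*} {S : N → Type*} (i : N) (x : ∀ j, S j) :
    combine i (x i) (fun j => x j.1) = x := by
  funext j
  unfold combine
  split_ifs with h
  · subst h; rfl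
  · rfl

/-- Theorem 4.8: a normal form game in which every strategy set is a complete lattice,
every section of a payoff function is weakly pseudo-supermodular, every payoff function
is upper-crossing, and every upper level set of a section is chain-complete downwards
and chain-bounded above, admits a largest Nash equilibrium. -/
theorem exists_largest_nashEquilibrium {N : Type*} [Nonempty N] {S : N → Type*}
    [∀ i, CompleteLattice (S i)] {C : N → Type*} [∀ i, LinearOrder (C i)]
    (u : ∀ i, (∀ j, S j) → C i)
    (hwps : ∀ i, ∀ t : ∀ j : {j : N // j ≠ i}, S j.1,
      WeaklyPseudoSupermodular (fun a : S i => u i (combine i a t)))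
    (huc : ∀ i, ∀ a a' : S i, a < a' → ∀ t t' : (∀ j : {j : N // j ≠ i}, S j.1), t < t' →
      u i (combine i a t) ≤ u i (combine i a' t) →
      ∃ v : S i, a' ≤ v ∧ u i (combine i a t') ≤ u i (combine i v t'))
    (hcc : ∀ i, ∀ t : ∀ j : {j : N // j ≠ i}, S j.1, ∀ c : C i,
      ChainCompleteDownwardsOn {a : S i | c ≤ u i (combine i a t)})
    (hba : ∀ i, ∀ t : ∀ j : {j : N // j ≠ i}, S j.1, ∀ c : C i,
      ChainBoundedAboveOn {a : S i | c ≤ u i (combine i a t)}) :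
    ∃ e : ∀ j, S j, IsNashEquilibrium u e ∧
      ∀ x : ∀ j, S j, IsNashEquilibrium u x → x ≤ e := by
  have hB : ∀ i, ∀ t : (∀ j : {j : N // j ≠ i}, S j.1), ∃ m : S i,
      IsGreatest {m : S i | ∀ a, u i (combine i a t) ≤ u i (combine i m t)} m :=
    fun i t => exists_greatest_argmax (f := fun a : S i => u i (combine i a t))
      (hwps i t) (hcc i t) (hba i t)
  choose B hB1 hB2 using hB
  have hmono : ∀ i, ∀ t t' : (∀ j : {j : N // j ≠ i}, S j.1), t ≤ t' → B i t ≤ B i t' := by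
    intro i t t' htt
    rcases htt.eq_or_lt with rfl | hlt
    · exact le_rfl
    by_contra hcon
    have hlt' : B i t' < B i t ⊔ B i t' := right_lt_sup.2 hcon
    have h1 : u i (combine i (B i t') t) ≤ u i (combine i (B i t ⊔ B i t') t) := by
      by_contra h
      push Not at h
      have := hwps i t (B i t) (B i t') (lt_inf_iff.2 ⟨h.trans_le (hB1 i t _), h⟩)
      exact absurd (hB1 i t _) (not_le.2 this)
    obtain ⟨v, hv, hv2⟩ := huc i _ _ hlt' t t' hlt h1
    have hv3 : v ≤ B i t' := hB2 i t' (fun a => (hB1 i t' a).trans hv2)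
    exact absurd (hv.trans hv3) hlt'.not_ge
  let F : (∀ j, S j) →o (∀ j, S j) :=
    ⟨fun x i => B i (fun j => x j.1), fun x y hxy i => hmono i _ _ (fun j => hxy j.1)⟩
  have hF : ∀ i, B i (fun j => F.gfp j.1) = F.gfp i := fun i => congrFun F.map_gfp i
  refine ⟨F.gfp, ?_, ?_⟩
  · intro i y
    have h := hB1 i (fun j => F.gfp j.1) y
    rw [hF i, combine_self] at h
    exact h
  · intro x hx
    refine F.le_gfp (fun i => hB2 i _ ?_)
    intro a
    rw [combine_self]
    exact hx i a
end

section
/- A nonempty lattice X is a complete lattice (every subset of X has a supremum and an infimum in X) if and only if X is chain-complete downwards and chain-bounded above. -/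
/-- A poset is chain-complete downwards if every nonempty chain has an infimum. -/
def ChainCompleteDownwards (X : Type*) [PartialOrder X] : Prop :=
  ∀ c : Set X, c.Nonempty → IsChain (· ≤ ·) c → ∃ m : X, IsGLB c m

/-- A poset is chain-bounded above if every nonempty chain has an upper bound. -/
def ChainBoundedAbove (X : Type*) [PartialOrder X] : Prop :=
  ∀ c : Set X, c.Nonempty → IsChain (· ≤ ·) c → ∃ u : X, ∀ x ∈ c, x ≤ u

/-- Lemma 4.10: a nonempty lattice is complete (every subset has a supremum and an
infimum) if and only if it is chain-complete downwards and chain-bounded above. -/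
theorem complete_iff_chainCompleteDownwards_and_chainBoundedAbove {X : Type*} [Lattice X]
    [Nonempty X] :
    (∀ A : Set X, (∃ s : X, IsLUB A s) ∧ (∃ m : X, IsGLB A m)) ↔
      ChainCompleteDownwards X ∧ ChainBoundedAbove X := by
  constructor
  · intro h
    refine ⟨fun c _ _ => (h c).2, fun c _ _ => ?_⟩
    obtain ⟨s, hs⟩ := (h c).1
    exact ⟨s, fun x hx => hs.1 hx⟩
  · rintro ⟨hd, hu⟩
    obtain ⟨t, ht⟩ : ∃ t : X, IsMax t :=
      zorn_le_nonempty fun c hc hne => by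
        obtain ⟨u, hu⟩ := hu c hne hc
        exact ⟨u, fun x hx => hu x hx⟩
    have htop : ∀ x, x ≤ t := fun x => le_trans le_sup_right (ht (le_sup_left : t ≤ t ⊔ x))
    have lub : ∀ A : Set X, ∃ s : X, IsLUB A s := by
      intro A
      obtain ⟨m, -, hm⟩ := zorn_le_nonempty₀ (α := Xᵒᵈ) (OrderDual.ofDual ⁻¹' upperBounds A)
        (fun c hcs hc y hy => by
          obtain ⟨g, hg⟩ := hd (OrderDual.toDual ⁻¹' c) ⟨OrderDual.ofDual y, hy⟩
            (fun a ha b hb hab => (hc ha hb hab).symm)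
          exact ⟨OrderDual.toDual g, fun a ha => hg.2 fun z hz => hcs hz ha,
            fun z hz => hg.1 hz⟩)
        (OrderDual.toDual t) (fun a _ => htop a)
      have hmU : OrderDual.ofDual m ∈ upperBounds A := hm.1
      refine ⟨OrderDual.ofDual m, hmU, fun u hu => ?_⟩
      have h1 : OrderDual.ofDual m ≤ OrderDual.ofDual m ⊓ u :=
        hm.2 (y := OrderDual.toDual (OrderDual.ofDual m ⊓ u))
          (fun a ha => le_inf (hmU ha) (hu ha))
          (inf_le_left : OrderDual.ofDual m ⊓ u ≤ OrderDual.ofDual m)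
      exact h1.trans inf_le_right
    intro A
    refine ⟨lub A, ?_⟩
    obtain ⟨s, hs⟩ := lub (lowerBounds A)
    exact ⟨s, isLUB_lowerBounds.1 hs⟩
end

section
/- Let P be a poset equipped with its interval topology. If P is compact in this topology, then P is chain-complete: every nonempty chain in P has a supremum and an infimum in P. -/
/-- The interval topology on a poset: closed sets are generated by the closed rays
`{x | x ≤ a}` and `{x | a ≤ x}`, i.e., the topology is generated by their complements. -/
def intervalTopology (P : Type*) [Preorder P] : TopologicalSpace P :=
  TopologicalSpace.generateFrom
    ({s | ∃ a : P, s = {x | x ≤ a}ᶜ} ∪ {s | ∃ a : P, s = {x | a ≤ x}ᶜ})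

/-- Lemma 4.12: a poset that is compact in its interval topology is chain-complete:
every nonempty chain has a supremum and an infimum. -/
theorem chainComplete_of_compact_intervalTopology {P : Type*} [PartialOrder P]
    (hc : @CompactSpace P (intervalTopology P)) :
    ∀ c : Set P, c.Nonempty → IsChain (· ≤ ·) c →
      (∃ s : P, IsLUB c s) ∧ (∃ m : P, IsGLB c m) := by
  intro c hne hch
  letI : TopologicalSpace P := intervalTopology P
  have hIic : ∀ a : P, IsClosed {x : P | x ≤ a} := fun a =>
    ⟨TopologicalSpace.isOpen_generateFrom_of_mem (Or.inl ⟨a, rfl⟩)⟩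
  have hIci : ∀ a : P, IsClosed {x : P | a ≤ x} := fun a =>
    ⟨TopologicalSpace.isOpen_generateFrom_of_mem (Or.inr ⟨a, rfl⟩)⟩
  haveI : Nonempty c := hne.to_subtype
  have htot : ∀ a b : c, a ≤ b ∨ b ≤ a := fun a b => hch.total a.2 b.2
  have key : ∀ (F : Filter P) (t : Set P) (s : P), ClusterPt s F → IsClosed t → t ∈ F → s ∈ t := by
    intro F t s hs ht htF
    exact isClosed_iff_clusterPt.1 ht s (hs.mono (Filter.le_principal_iff.2 htF))
  constructor
  · haveI : IsDirectedOrder c := ⟨fun a b => (htot a b).elim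
      (fun h => ⟨b, h, le_rfl⟩) (fun h => ⟨a, le_rfl, h⟩)⟩
    obtain ⟨s, hs⟩ := exists_clusterPt_of_compactSpace
      (Filter.map (Subtype.val : c → P) Filter.atTop)
    refine ⟨s, fun a ha => ?_, fun u hu => ?_⟩
    · exact key _ _ s hs (hIci a) (Filter.mem_map.2 (Filter.mem_atTop (⟨a, ha⟩ : c)))
    · exact key _ _ s hs (hIic u) (Filter.mem_map.2 (Filter.univ_mem' fun x => hu x.2))
  · haveI : IsCodirectedOrder c := ⟨fun a b => (htot a b).elim
      (fun h => ⟨a, le_rfl, h⟩) (fun h => ⟨b, h, le_rfl⟩)⟩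
    obtain ⟨s, hs⟩ := exists_clusterPt_of_compactSpace
      (Filter.map (Subtype.val : c → P) Filter.atBot)
    refine ⟨s, fun a ha => ?_, fun u hu => ?_⟩
    · exact key _ _ s hs (hIic a) (Filter.mem_map.2 (Filter.mem_atBot (⟨a, ha⟩ : c)))
    · exact key _ _ s hs (hIci u) (Filter.mem_map.2 (Filter.univ_mem' fun x => hu x.2))
end
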